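/- Let G be a finite simple connected graph, let u and v be vertices of G, and let 𝔅 be the set of blocks of G. For a block B, let deq_B(x,y) denote the number of edges of B that are (x,y)-distance-equal (with distances measured in G), and let u_B and v_B denote the vertices of B closest (in G) to u and to v, respectively. Then deq_B(u,v) = deq_B(u_B, v_B) for every block B, and consequently deq_G(u,v) = Σ_{B ∈ 𝔅} deq_B(u_B, v_B). -/

import Mathlib

open Finset

attribute [local instance] Classical.propDecidable

variable {V : Type*}

/-- `n_G(s,t)`: the number of vertices strictly closer to `s` than to `t`. -/
noncomputable def closerCount [Fintype V] (G : SimpleGraph V) (s t : V) : ℕ :=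
  (Finset.univ.filter fun w => G.dist w s < G.dist w t).card

/-- `o_G(s,t)`: the number of vertices equidistant from `s` and `t`. -/
noncomputable def equidistCount [Fintype V] (G : SimpleGraph V) (s t : V) : ℕ :=
  (Finset.univ.filter fun w => G.dist w s = G.dist w t).card

lemma equidistCount_comm [Fintype V] (G : SimpleGraph V) (s t : V) :
    equidistCount G s t = equidistCount G t s := by
  unfold equidistCount
  congr 1
  ext w
  simp only [Finset.mem_filter]
  exact and_congr_right fun _ => ⟨Eq.symm, Eq.symm⟩

/-- `o_G` as a function on unordered pairs (edges). -/
noncomputable def equidistSym2 [Fintype V] (G : SimpleGraph V) : Sym2 V → ℕ :=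
  Sym2.lift ⟨fun s t => equidistCount G s t, fun s t => equidistCount_comm G s t⟩

/-- The Wiener index: the sum of distances over unordered pairs of vertices. -/
noncomputable def wiener [Fintype V] (G : SimpleGraph V) : ℕ :=
  ∑ p : Sym2 V, Sym2.lift ⟨fun u v => G.dist u v, fun _ _ => G.dist_comm⟩ p

/-- The Szeged index `Sz(G) = Σ_{{s,t} ∈ E(G)} n_G(s,t) n_G(t,s)`. -/
noncomputable def szeged [Fintype V] (G : SimpleGraph V) : ℕ :=
  ∑ e ∈ G.edgeFinset,
    Sym2.lift ⟨fun s t => closerCount G s t * closerCount G t s,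
      fun _ _ => Nat.mul_comm _ _⟩ e

/-- The revised Szeged index
`Sz*(G) = Σ_{{s,t} ∈ E(G)} (n_G(s,t) + o_G(s,t)/2) (n_G(t,s) + o_G(t,s)/2)`. -/
noncomputable def revisedSzeged [Fintype V] (G : SimpleGraph V) : ℚ :=
  ∑ e ∈ G.edgeFinset,
    Sym2.lift ⟨fun s t =>
      ((closerCount G s t : ℚ) + (equidistCount G s t : ℚ) / 2) *
        ((closerCount G t s : ℚ) + (equidistCount G t s : ℚ) / 2),
      fun _ _ => mul_comm _ _⟩ e

/-- An edge `{s,t}` is `(u,v)`-distance-disparate if `d(u,s) < d(u,t)` and `d(v,s) > d(v,t)`,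
or `d(u,s) > d(u,t)` and `d(v,s) < d(v,t)`. -/
def IsDisparate (G : SimpleGraph V) (u v : V) : Sym2 V → Prop :=
  Sym2.lift ⟨fun s t =>
    (G.dist u s < G.dist u t ∧ G.dist v t < G.dist v s) ∨
      (G.dist u t < G.dist u s ∧ G.dist v s < G.dist v t),
    fun _ _ => propext or_comm⟩

/-- `dis_G(u,v)`: the number of `(u,v)`-distance-disparate edges of `G`. -/
noncomputable def disCount [Fintype V] (G : SimpleGraph V) (u v : V) : ℕ :=
  (G.edgeFinset.filter (IsDisparate G u v)).card

/-- An edge `{s,t}` is `(u,v)`-distance-equal if `d(u,s) = d(u,t)` and `d(v,s) = d(v,t)`. -/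
def IsDistEqual (G : SimpleGraph V) (u v : V) : Sym2 V → Prop :=
  Sym2.lift ⟨fun s t => G.dist u s = G.dist u t ∧ G.dist v s = G.dist v t,
    fun _ _ => propext ⟨fun h => ⟨h.1.symm, h.2.symm⟩, fun h => ⟨h.1.symm, h.2.symm⟩⟩⟩

/-- `deq_G(u,v)`: the number of `(u,v)`-distance-equal edges of `G`. -/
noncomputable def deqCount [Fintype V] (G : SimpleGraph V) (u v : V) : ℕ :=
  (G.edgeFinset.filter (IsDistEqual G u v)).card

/-- A subgraph without cut vertices: it is connected and deleting any single vertex leaves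
it preconnected. -/
def NoCutVertexSub (G : SimpleGraph V) (H : G.Subgraph) : Prop :=
  H.Connected ∧ ∀ v : V, ((H.deleteVerts {v}).coe.Preconnected)

/-- A block of `G`: a maximal connected subgraph without a cut vertex. -/
def IsBlock (G : SimpleGraph V) (B : G.Subgraph) : Prop :=
  NoCutVertexSub G B ∧ ∀ H : G.Subgraph, NoCutVertexSub G H → B ≤ H → B = H

/-- The subgraph `B` is a single edge together with its two endpoints. -/
def IsEdgeBlock (G : SimpleGraph V) (B : G.Subgraph) : Prop :=
  ∃ (u v : V) (h : G.Adj u v), B = G.subgraphOfAdj h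

/-- The subgraph `B` is a cycle (of some length `n ≥ 3`). -/
def IsCycleBlock (G : SimpleGraph V) (B : G.Subgraph) : Prop :=
  ∃ n : ℕ, 3 ≤ n ∧ Nonempty (B.coe ≃g SimpleGraph.cycleGraph n)

/-- A cactus graph: a connected graph in which every block is an edge or a cycle. -/
def IsCactus (G : SimpleGraph V) : Prop :=
  G.Connected ∧ ∀ B : G.Subgraph, IsBlock G B → IsEdgeBlock G B ∨ IsCycleBlock G B
/-- `deq_B(x,y)`: the number of `(x,y)`-distance-equal edges (distances in `G`) lying in the
subgraph `B`. -/
noncomputable def deqCountIn [Fintype V] (G : SimpleGraph V) (B : G.Subgraph)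
    (u v : V) : ℕ :=
  {e ∈ B.edgeSet | IsDistEqual G u v e}.ncard

/-- Adjacency in `H` avoiding the vertex `v`. -/
def AvoidAdj {G : SimpleGraph V} (H : G.Subgraph) (v a b : V) : Prop :=
  H.Adj a b ∧ a ≠ v ∧ b ≠ v

lemma AvoidAdj.rsymm {G : SimpleGraph V} {H : G.Subgraph} {v a b : V}
    (h : Relation.ReflTransGen (AvoidAdj H v) a b) :
    Relation.ReflTransGen (AvoidAdj H v) b a := by
  induction h with
  | refl => exact .refl
  | tail _ h ih => exact .head ⟨h.1.symm, h.2.2, h.2.1⟩ ih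

lemma AvoidAdj.rmono {G : SimpleGraph V} {H K : G.Subgraph} (hHK : H ≤ K) {v a b : V}
    (h : Relation.ReflTransGen (AvoidAdj H v) a b) :
    Relation.ReflTransGen (AvoidAdj K v) a b :=
  Relation.ReflTransGen.mono (fun _ _ h => ⟨hHK.2 h.1, h.2⟩) _ _ h

lemma deleteVerts_preconnected_iff {G : SimpleGraph V} (H : G.Subgraph) (v : V) :
    (H.deleteVerts {v}).coe.Preconnected ↔
      ∀ x ∈ H.verts, ∀ y ∈ H.verts, x ≠ v → y ≠ v →
        Relation.ReflTransGen (AvoidAdj H v) x y := by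
  constructor
  · intro h x hx y hy hxv hyv
    have := (SimpleGraph.reachable_iff_reflTransGen _ _).1
      (h ⟨x, by simp [hx, hxv]⟩ ⟨y, by simp [hy, hyv]⟩)
    refine Relation.ReflTransGen.lift (p := AvoidAdj H v) Subtype.val ?_ _ _ this
    rintro ⟨a, ha⟩ ⟨b, hb⟩ hab
    simp at ha hb hab
    exact ⟨hab.2.2, ha.2, hb.2⟩
  · rintro h ⟨x, hx⟩ ⟨y, hy⟩
    have hx' := hx
    have hy' := hy
    simp at hx' hy'
    have key := h x hx'.1 y hy'.1 hx'.2 hy'.2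
    clear h hx' hy'
    induction key with
    | refl => exact SimpleGraph.Reachable.refl _
    | @tail b c hb hbc ih =>
      have hbm : b ∈ (H.deleteVerts {v}).verts := by
        simp [H.edge_vert hbc.1, hbc.2.1]
      refine (ih hbm).trans (SimpleGraph.Adj.reachable ?_)
      simp [hbc.1, hbc.2.1, hbc.2.2, H.edge_vert hbc.1, H.edge_vert hbc.1.symm]

lemma noCut_iff {G : SimpleGraph V} (H : G.Subgraph) :
    NoCutVertexSub G H ↔ H.Connected ∧ ∀ v, ∀ x ∈ H.verts, ∀ y ∈ H.verts, x ≠ v → y ≠ v →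
        Relation.ReflTransGen (AvoidAdj H v) x y := by
  simp only [NoCutVertexSub, deleteVerts_preconnected_iff]

lemma noCut_of_reach {G : SimpleGraph V} {B H : G.Subgraph} (hB : NoCutVertexSub G B)
    (hBH : B ≤ H) (hc : H.Connected)
    (h : ∀ v, ∀ x ∈ H.verts, x ≠ v → ∃ b ∈ B.verts, b ≠ v ∧
      Relation.ReflTransGen (AvoidAdj H v) x b) : NoCutVertexSub G H := by
  rw [noCut_iff] at hB ⊢
  refine ⟨hc, fun v x hx y hy hxv hyv => ?_⟩
  obtain ⟨b, hb, hbv, hxb⟩ := h v x hx hxv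
  obtain ⟨c, hcB, hcv, hyc⟩ := h v y hy hyv
  exact (hxb.trans (AvoidAdj.rmono hBH (hB.2 v b hb c hcB hbv hcv))).trans (AvoidAdj.rsymm hyc)

lemma noCut_sup {G : SimpleGraph V} {B C : G.Subgraph} (hB : NoCutVertexSub G B)
    (hC : NoCutVertexSub G C) {a b : V} (hab : a ≠ b) (haB : a ∈ B.verts) (hbB : b ∈ B.verts)
    (haC : a ∈ C.verts) (hbC : b ∈ C.verts) : NoCutVertexSub G (B ⊔ C) := by
  refine noCut_of_reach hB le_sup_left (SimpleGraph.Subgraph.connected_sup hB.1.preconnected hC.1.preconnected ⟨a, haB, haC⟩) ?_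
  intro v x hx hxv
  rcases hx with hx | hx
  · exact ⟨x, hx, hxv, .refl⟩
  · rw [noCut_iff] at hC
    by_cases hav : a = v
    · have hbv : b ≠ v := fun h => hab (hav.trans h.symm)
      exact ⟨b, hbB, hbv, AvoidAdj.rmono le_sup_right (hC.2 v x hx b hbC hxv hbv)⟩
    · exact ⟨a, haB, hav, AvoidAdj.rmono le_sup_right (hC.2 v x hx a haC hxv hav)⟩

lemma walk_avoid {G : SimpleGraph V} {H : G.Subgraph} {v a b : V} (W : G.Walk a b)
    (hW : ∀ x y, s(x, y) ∈ W.edges → H.Adj x y) (hv : v ∉ W.support) :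
    Relation.ReflTransGen (AvoidAdj H v) a b := by
  induction W with
  | nil => exact .refl
  | @cons a c b h p ih =>
    simp only [SimpleGraph.Walk.support_cons, List.mem_cons, not_or] at hv
    refine .head ⟨hW _ _ (by simp), fun h => hv.1 h.symm, ?_⟩
      (ih (fun x y hxy => hW x y (by simp [hxy])) hv.2)
    rintro rfl
    exact hv.2 p.start_mem_support

lemma path_le_block {G : SimpleGraph V} {B : G.Subgraph} (hB : IsBlock G B) {g t : V}
    (hg : g ∈ B.verts) (ht : t ∈ B.verts) (P : G.Walk g t) (hP : P.IsPath) :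
    P.toSubgraph ≤ B := by
  have key : NoCutVertexSub G (B ⊔ P.toSubgraph) := by
    refine noCut_of_reach hB.1 le_sup_left
      (SimpleGraph.Subgraph.connected_sup hB.1.1.preconnected P.toSubgraph_connected.preconnected ⟨g, hg, by simp⟩) ?_
    intro v x hx hxv
    rcases hx with hx | hx
    · exact ⟨x, hx, hxv, .refl⟩
    have hx : x ∈ P.support := by simpa using hx
    have hadj : ∀ y z, s(y, z) ∈ P.edges → (B ⊔ P.toSubgraph).Adj y z := by
      intro y z h
      refine Or.inr ?_
      rw [← SimpleGraph.Subgraph.mem_edgeSet, SimpleGraph.Walk.mem_edges_toSubgraph]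
      exact h
    by_cases hv : v ∈ (P.takeUntil x hx).support
    · have hv2 : v ∉ (P.dropUntil x hx).support := by
        intro hv2
        have hnd := hP.support_nodup
        rw [← P.take_spec hx, SimpleGraph.Walk.support_append] at hnd
        have hd := List.disjoint_of_nodup_append hnd
        rw [SimpleGraph.Walk.mem_support_iff] at hv2
        rcases hv2 with h | h
        · exact hxv h.symm
        · exact hd hv h
      refine ⟨t, ht, ?_, walk_avoid _ (fun y z h => hadj y z
        (P.edges_dropUntil_subset_edges hx h)) hv2⟩
      rintro rfl
      exact hv2 (SimpleGraph.Walk.end_mem_support _)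
    · refine ⟨g, hg, ?_, AvoidAdj.rsymm (walk_avoid _ (fun y z h => hadj y z
        (P.edges_takeUntil_subset_edges hx h)) hv)⟩
      rintro rfl
      exact hv (SimpleGraph.Walk.start_mem_support _)
  rw [hB.2 _ key le_sup_left]
  exact le_sup_right

lemma gate {G : SimpleGraph V} (hG : G.Connected) {B : G.Subgraph} (hB : IsBlock G B)
    {u g s : V} (hg : g ∈ B.verts) (hmin : ∀ x ∈ B.verts, G.dist u g ≤ G.dist u x)
    (hs : s ∈ B.verts) : G.dist u s = G.dist u g + G.dist g s := by
  obtain ⟨P, hP⟩ := hG.exists_walk_length_eq_dist u g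
  obtain ⟨Q, hQ⟩ := hG.exists_walk_length_eq_dist u s
  have hgQ : g ∈ Q.support := by
    by_contra hgQ
    let R := (P.reverse.append Q).bypass
    have hR : R.IsPath := SimpleGraph.Walk.bypass_isPath _
    have hRB := path_le_block hB hg hs R hR
    have hRe : R.edges ⊆ (P.reverse.append Q).edges :=
      SimpleGraph.Walk.edges_bypass_subset_edges _
    clear_value R
    cases R with
    | nil => exact hgQ Q.end_mem_support
    | @cons _ r _ h p =>
      have hr : r ∈ B.verts := hRB.1 (by simp)
      have he := hRe (show s(g, r) ∈ _ by simp)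
      rw [SimpleGraph.Walk.edges_append, List.mem_append, SimpleGraph.Walk.edges_reverse,
        List.mem_reverse] at he
      rcases he with he | he
      · have hrP : r ∈ P.support := P.snd_mem_support_of_mem_edges he
        have h1 := hmin r hr
        have h2 := SimpleGraph.dist_le (P.takeUntil r hrP)
        have h3 := congrArg SimpleGraph.Walk.length (P.take_spec hrP)
        rw [SimpleGraph.Walk.length_append] at h3
        have h4 : (P.dropUntil r hrP).length = 0 := by omega
        exact h.ne (SimpleGraph.Walk.eq_of_length_eq_zero h4).symm
      · exact hgQ (Q.fst_mem_support_of_mem_edges he)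
  have h1 := SimpleGraph.dist_le (Q.takeUntil g hgQ)
  have h2 := SimpleGraph.dist_le (Q.dropUntil g hgQ)
  have h3 := congrArg SimpleGraph.Walk.length (Q.take_spec hgQ)
  rw [SimpleGraph.Walk.length_append] at h3
  have h4 := hG.dist_triangle (u := u) (v := g) (w := s)
  omega

lemma noCut_edge {G : SimpleGraph V} {a b : V} (h : G.Adj a b) :
    NoCutVertexSub G (G.subgraphOfAdj h) := by
  rw [noCut_iff]
  refine ⟨SimpleGraph.Subgraph.subgraphOfAdj_connected h, ?_⟩
  intro v x hx y hy hxv hyv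
  by_cases hxy : x = y
  · rw [hxy]
  · refine .single ⟨?_, hxv, hyv⟩
    simp at hx hy ⊢
    grind

lemma exists_block {V : Type*} [Finite V] {G : SimpleGraph V} {a b : V} (h : G.Adj a b) :
    ∃ B : G.Subgraph, IsBlock G B ∧ B.Adj a b := by
  obtain ⟨B, hle, hB⟩ := (Set.toFinite {H : G.Subgraph | NoCutVertexSub G H}).exists_le_maximal
    (noCut_edge h)
  exact ⟨B, ⟨hB.1, fun H hH hBH => le_antisymm hBH (hB.2 hH hBH)⟩, hle.2 (by simp)⟩

lemma block_unique {G : SimpleGraph V} {B C : G.Subgraph} (hB : IsBlock G B) (hC : IsBlock G C)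
    {a b : V} (h : B.Adj a b) (h' : C.Adj a b) : B = C := by
  have := noCut_sup hB.1 hC.1 h.ne h.fst_mem h.snd_mem h'.fst_mem h'.snd_mem
  exact (hB.2 _ this le_sup_left).trans (hC.2 _ this le_sup_right).symm

/-- **Lemma (distance-equal edges split over blocks).**
For vertices `u, v` of a finite simple connected graph `G` with set of blocks `𝔅`, where
`uB B` and `vB B` denote the vertices of the block `B` closest in `G` to `u` and to `v`
respectively, `deq_B(u,v) = deq_B(u_B, v_B)` for every block `B`, and consequently
`deq_G(u,v) = Σ_{B ∈ 𝔅} deq_B(u_B, v_B)`. -/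
theorem deqCount_eq_sum_blocks [Fintype V] (G : SimpleGraph V) (hG : G.Connected) (u v : V)
    (𝔅 : Finset G.Subgraph) (h𝔅 : ∀ B : G.Subgraph, B ∈ 𝔅 ↔ IsBlock G B)
    (uB vB : G.Subgraph → V)
    (huB : ∀ B ∈ 𝔅, uB B ∈ B.verts ∧ ∀ x ∈ B.verts, G.dist u (uB B) ≤ G.dist u x)
    (hvB : ∀ B ∈ 𝔅, vB B ∈ B.verts ∧ ∀ x ∈ B.verts, G.dist v (vB B) ≤ G.dist v x) :
    (∀ B ∈ 𝔅, deqCountIn G B u v = deqCountIn G B (uB B) (vB B)) ∧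
      deqCount G u v = ∑ B ∈ 𝔅, deqCountIn G B (uB B) (vB B) := by
  have h1 : ∀ B ∈ 𝔅, deqCountIn G B u v = deqCountIn G B (uB B) (vB B) := by
    intro B hB
    have hb := (h𝔅 B).1 hB
    unfold deqCountIn
    congr 1
    ext e
    induction e with
    | _ s t =>
      simp only [Set.mem_ofPred_eq, SimpleGraph.Subgraph.mem_edgeSet]
      refine and_congr_right fun hst => ?_
      have e1 := gate hG hb (huB B hB).1 (huB B hB).2 hst.fst_mem
      have e2 := gate hG hb (huB B hB).1 (huB B hB).2 hst.snd_mem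
      have e3 := gate hG hb (hvB B hB).1 (hvB B hB).2 hst.fst_mem
      have e4 := gate hG hb (hvB B hB).1 (hvB B hB).2 hst.snd_mem
      simp only [IsDistEqual, Sym2.lift_mk]
      omega
  refine ⟨h1, ?_⟩
  rw [← Finset.sum_congr rfl h1]
  have h2 : ∀ B ∈ 𝔅, deqCountIn G B u v =
      (G.edgeFinset.filter fun e => e ∈ B.edgeSet ∧ IsDistEqual G u v e).card := by
    intro B _
    unfold deqCountIn
    rw [← Set.ncard_coe_finset]
    congr 1
    ext e
    simp only [Set.mem_ofPred_eq, Finset.coe_filter, SimpleGraph.mem_edgeFinset]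
    exact ⟨fun h => ⟨B.edgeSet_subset h.1, h⟩, fun h => h.2⟩
  rw [Finset.sum_congr rfl h2, ← Finset.card_biUnion]
  · unfold deqCount
    congr 1
    ext e
    induction e with
    | _ s t =>
      simp only [Finset.mem_filter, Finset.mem_biUnion, SimpleGraph.mem_edgeFinset,
        SimpleGraph.mem_edgeSet, SimpleGraph.Subgraph.mem_edgeSet]
      constructor
      · rintro ⟨h, h'⟩
        obtain ⟨B, hB, hst⟩ := exists_block h
        exact ⟨B, (h𝔅 B).2 hB, h, hst, h'⟩
      · rintro ⟨B, -, h, -, h'⟩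
        exact ⟨h, h'⟩
  · intro B hB C hC hBC
    rw [Function.onFun, Finset.disjoint_left]
    intro e he he'
    induction e with
    | _ s t =>
      simp only [Finset.mem_filter, SimpleGraph.Subgraph.mem_edgeSet] at he he'
      exact hBC (block_unique ((h𝔅 B).1 hB) ((h𝔅 C).1 hC) he.2.1 he'.2.1)
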